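/- arXiv:1406.3641 — 2 statements merged into one kernel-verified Lean document; each statement's English description precedes it below -/
import Mathlib

section
/- Let U ⊆ ℝ^m be an open set, let (g^{μν}) be a constant symmetric invertible real m×m matrix, let A_μ : U → M_n(ℝ) (μ = 1,…,m) be twice continuously differentiable, and let f : U → M_n(ℝ) be twice continuously differentiable with f(x) invertible for every x. Define F_{μν} := ∂_μ A_ν − ∂_ν A_μ + [A_μ, A_ν], the raised-index curvature F^{ab} := Σ_{μ,ν} g^{aμ} g^{bν} F_{μν}, and similarly Ã_μ := f⁻¹ ∂_μ f + f⁻¹ A_μ f with curvature F̃ and raised-index curvature F̃^{ab}. If A satisfies the Yang–Mills equation Σ_b (∂_b F^{ab} + [A_b, F^{ab}]) = 0 on U for every a, then the gauge transform à satisfies the same equation: Σ_b (∂_b F̃^{ab} + [Ã_b, F̃^{ab}]) = 0 on U for every a. -/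
/-!
The curvature is gauge covariant: `F̃_{μν} = f⁻¹ F_{μν} f` on `U`
(`curvature_conj`). This is the Leibniz rule together with `∂(f⁻¹) = -f⁻¹ (∂f) f⁻¹`; the second
derivatives of `f` cancel because `∂_μ ∂_ν f = ∂_ν ∂_μ f` for `f` of class `C²`. Since the entries
`g^{μν}` are constant scalars, the raised-index curvature is conjugated in the same way. The
covariant derivative of a conjugated field `f⁻¹ P f` with respect to the gauge transform is the
conjugate `f⁻¹ (∂_b P + [A_b, P]) f` (`covariant_conj`), so the Yang–Mills expression of `Ã` is the
conjugate by `f` of that of `A`, which vanishes.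
-/

noncomputable instance (n : ℕ) : NormedRing (Matrix (Fin n) (Fin n) ℝ) :=
  Matrix.linftyOpNormedRing

noncomputable instance (n : ℕ) : NormedAlgebra ℝ (Matrix (Fin n) (Fin n) ℝ) :=
  Matrix.linftyOpNormedAlgebra

/-- Partial derivative in the `μ`-th coordinate direction of a matrix-valued map on `ℝ^m`. -/
noncomputable def pderiv' {m n : ℕ} (μ : Fin m)
    (A : (Fin m → ℝ) → Matrix (Fin n) (Fin n) ℝ) (x : Fin m → ℝ) :
    Matrix (Fin n) (Fin n) ℝ :=
  fderiv ℝ A x (Pi.single μ 1)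

section Normed

/-! The derivative in `pderiv'` is elaborated with the entrywise topology and additive structure on
matrices, which agree with those of the normed ring only after unfolding. The rules below are stated
for an abstract normed ring, and transfer to matrices by definitional equality. -/

variable {E R : Type*} [NormedAddCommGroup E] [NormedSpace ℝ E] [NormedRing R] [NormedAlgebra ℝ R]
  {P Q : E → R} {x : E}

theorem fderiv_add_apply (hP : DifferentiableAt ℝ P x) (hQ : DifferentiableAt ℝ Q x) (v : E) :
    fderiv ℝ (fun y => P y + Q y) x v = fderiv ℝ P x v + fderiv ℝ Q x v := by
  simp [fderiv_fun_add hP hQ]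

theorem fderiv_mul_apply (hP : DifferentiableAt ℝ P x) (hQ : DifferentiableAt ℝ Q x) (v : E) :
    fderiv ℝ (fun y => P y * Q y) x v = fderiv ℝ P x v * Q x + P x * fderiv ℝ Q x v := by
  simp [fderiv_fun_mul' hP hQ, add_comm]

theorem fderiv_fderiv_apply (hd : DifferentiableAt ℝ (fderiv ℝ P) x) (v w : E) :
    fderiv ℝ (fun y => fderiv ℝ P y w) x v = fderiv ℝ (fderiv ℝ P) x v w := by
  rw [fderiv_clm_apply hd (differentiableAt_const _)]
  simp

end Normed

section Partial

variable {m n : ℕ} {U : Set (Fin m → ℝ)} {x : Fin m → ℝ}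
  {P Q : (Fin m → ℝ) → Matrix (Fin n) (Fin n) ℝ}

theorem pderiv'_add (μ : Fin m) (hP : DifferentiableAt ℝ P x) (hQ : DifferentiableAt ℝ Q x) :
    pderiv' μ (fun y => P y + Q y) x = pderiv' μ P x + pderiv' μ Q x := by
  exact fderiv_add_apply hP hQ _

theorem pderiv'_mul (μ : Fin m) (hP : DifferentiableAt ℝ P x) (hQ : DifferentiableAt ℝ Q x) :
    pderiv' μ (fun y => P y * Q y) x = pderiv' μ P x * Q x + P x * pderiv' μ Q x := by
  exact fderiv_mul_apply hP hQ _

theorem pderiv'_congr (hU : IsOpen U) (hx : x ∈ U) (μ : Fin m) (h : ∀ y ∈ U, P y = Q y) :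
    pderiv' μ P x = pderiv' μ Q x := by
  have : P =ᶠ[nhds x] Q := Filter.eventually_of_mem (hU.mem_nhds hx) h
  rw [pderiv', pderiv', this.fderiv_eq]

theorem contDiffOn_pderiv' (hU : IsOpen U) (μ : Fin m) (hP : ContDiffOn ℝ 2 P U) :
    ContDiffOn ℝ 1 (pderiv' μ P) U :=
  (hP.fderiv_of_isOpen hU (m := 1) (by norm_num)).clm_apply contDiffOn_const

theorem differentiableAt_of_contDiffOn {k : WithTop ℕ∞} (hU : IsOpen U) (hx : x ∈ U)
    (hk : k ≠ 0) (hP : ContDiffOn ℝ k P U) : DifferentiableAt ℝ P x :=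
  (hP.contDiffAt (hU.mem_nhds hx)).differentiableAt hk

/-- Symmetry of second partial derivatives of a `C²` map. -/
theorem pderiv'_comm (hU : IsOpen U) (hx : x ∈ U) (μ ν : Fin m) (hP : ContDiffOn ℝ 2 P U) :
    pderiv' μ (pderiv' ν P) x = pderiv' ν (pderiv' μ P) x := by
  have hc := hP.contDiffAt (hU.mem_nhds hx)
  have hs : IsSymmSndFDerivAt ℝ P x := hc.isSymmSndFDerivAt (by simp)
  have hd : DifferentiableAt ℝ (fderiv ℝ P) x :=
    (hc.fderiv_right (m := 1) (by norm_num)).differentiableAt (by norm_num)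
  have key : ∀ α β : Fin m, pderiv' α (pderiv' β P) x
      = fderiv ℝ (fderiv ℝ P) x (Pi.single α 1) (Pi.single β 1) := by
    intro α β
    exact fderiv_fderiv_apply hd _ _
  rw [key, key]
  exact hs _ _

theorem contDiffOn_matrix_inv {f : (Fin m → ℝ) → Matrix (Fin n) (Fin n) ℝ} (hf : ContDiffOn ℝ 2 f U)
    (hinv : ∀ x ∈ U, IsUnit (f x)) : ContDiffOn ℝ 2 (fun y => (f y)⁻¹) U := by
  intro y hy
  obtain ⟨u, hu⟩ := hinv y hy
  have h := contDiffAt_ringInverse ℝ (n := 2) u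
  rw [hu] at h
  simp only [Matrix.nonsing_inv_eq_ringInverse]
  exact h.comp_contDiffWithinAt y (hf y hy)

theorem pderiv'_inv {f : (Fin m → ℝ) → Matrix (Fin n) (Fin n) ℝ} (hU : IsOpen U)
    (hf : ContDiffOn ℝ 2 f U) (hinv : ∀ x ∈ U, IsUnit (f x)) (hx : x ∈ U) (μ : Fin m) :
    pderiv' μ (fun y => (f y)⁻¹) x = -((f x)⁻¹ * pderiv' μ f x * (f x)⁻¹) := by
  have hdf := differentiableAt_of_contDiffOn hU hx (by norm_num) hf
  have hdh := differentiableAt_of_contDiffOn hU hx (by norm_num) (contDiffOn_matrix_inv hf hinv)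
  have hfh : f x * (f x)⁻¹ = 1 :=
    Matrix.mul_nonsing_inv _ ((Matrix.isUnit_iff_isUnit_det _).1 (hinv x hx))
  have h1 : pderiv' μ (fun y => (f y)⁻¹ * f y) x = 0 := by
    rw [pderiv'_congr (Q := fun _ => 1) hU hx μ (fun y hy =>
      Matrix.nonsing_inv_mul _ ((Matrix.isUnit_iff_isUnit_det _).1 (hinv y hy)))]
    simp [pderiv']
  rw [pderiv'_mul μ hdh hdf] at h1
  have h2 := congrArg (· * (f x)⁻¹) (eq_neg_of_add_eq_zero_left h1)
  simpa only [mul_assoc, hfh, mul_one, neg_mul] using h2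

end Partial

section Gauge

variable {m n : ℕ} {U : Set (Fin m → ℝ)} {x : Fin m → ℝ}
  {A Atil : Fin m → (Fin m → ℝ) → Matrix (Fin n) (Fin n) ℝ}
  {f : (Fin m → ℝ) → Matrix (Fin n) (Fin n) ℝ}

/-- Gauge covariance of the curvature: `F̃_{μν} = f⁻¹ F_{μν} f`. -/
theorem curvature_conj (hU : IsOpen U) (hA : ∀ μ, ContDiffOn ℝ 2 (A μ) U)
    (hf : ContDiffOn ℝ 2 f U) (hinv : ∀ x ∈ U, IsUnit (f x))
    (hAtil : ∀ μ x, Atil μ x = (f x)⁻¹ * pderiv' μ f x + (f x)⁻¹ * A μ x * f x)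
    (hx : x ∈ U) (μ ν : Fin m) :
    pderiv' μ (Atil ν) x - pderiv' ν (Atil μ) x + (Atil μ x * Atil ν x - Atil ν x * Atil μ x)
      = (f x)⁻¹ * (pderiv' μ (A ν) x - pderiv' ν (A μ) x
          + (A μ x * A ν x - A ν x * A μ x)) * f x := by
  have hdf := differentiableAt_of_contDiffOn hU hx (by norm_num) hf
  have hdh := differentiableAt_of_contDiffOn hU hx (by norm_num) (contDiffOn_matrix_inv hf hinv)
  have hdA := fun μ => differentiableAt_of_contDiffOn hU hx (by norm_num) (hA μ)
  have hdp := fun μ =>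
    differentiableAt_of_contDiffOn hU hx (by norm_num) (contDiffOn_pderiv' hU μ hf)
  have hfh : f x * (f x)⁻¹ = 1 :=
    Matrix.mul_nonsing_inv _ ((Matrix.isUnit_iff_isUnit_det _).1 (hinv x hx))
  have hcancel : ∀ X, f x * ((f x)⁻¹ * X) = X := fun X => by rw [← mul_assoc, hfh, one_mul]
  have hder : ∀ α β : Fin m, pderiv' α (Atil β) x
      = -((f x)⁻¹ * pderiv' α f x * (f x)⁻¹) * pderiv' β f x
        + (f x)⁻¹ * pderiv' α (pderiv' β f) x
        + ((-((f x)⁻¹ * pderiv' α f x * (f x)⁻¹) * A β x + (f x)⁻¹ * pderiv' α (A β) x) * f x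
          + (f x)⁻¹ * A β x * pderiv' α f x) := by
    intro α β
    rw [show Atil β = fun y => (f y)⁻¹ * pderiv' β f y + (f y)⁻¹ * A β y * f y from
        funext (hAtil β),
      pderiv'_add α (hdh.fun_mul (hdp β)) ((hdh.fun_mul (hdA β)).fun_mul hdf),
      pderiv'_mul α hdh (hdp β), pderiv'_mul α (hdh.fun_mul (hdA β)) hdf,
      pderiv'_mul α hdh (hdA β), pderiv'_inv hU hf hinv hx]
  rw [hder, hder, hAtil, hAtil, pderiv'_comm hU hx ν μ hf]
  simp only [mul_add, add_mul, mul_sub, sub_mul, neg_mul, mul_assoc, hcancel]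
  abel

/-- The covariant derivative with respect to the gauge transform of a conjugated field `f⁻¹ P f`
is the conjugate of the covariant derivative of `P`. -/
theorem covariant_conj {P : (Fin m → ℝ) → Matrix (Fin n) (Fin n) ℝ} (hU : IsOpen U)
    (hf : ContDiffOn ℝ 2 f U) (hinv : ∀ x ∈ U, IsUnit (f x))
    (hAtil : ∀ μ x, Atil μ x = (f x)⁻¹ * pderiv' μ f x + (f x)⁻¹ * A μ x * f x)
    (hx : x ∈ U) (hP : DifferentiableAt ℝ P x) (b : Fin m) :
    pderiv' b (fun y => (f y)⁻¹ * P y * f y) x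
        + (Atil b x * ((f x)⁻¹ * P x * f x) - (f x)⁻¹ * P x * f x * Atil b x)
      = (f x)⁻¹ * (pderiv' b P x + (A b x * P x - P x * A b x)) * f x := by
  have hdf := differentiableAt_of_contDiffOn hU hx (by norm_num) hf
  have hdh := differentiableAt_of_contDiffOn hU hx (by norm_num) (contDiffOn_matrix_inv hf hinv)
  have hfh : f x * (f x)⁻¹ = 1 :=
    Matrix.mul_nonsing_inv _ ((Matrix.isUnit_iff_isUnit_det _).1 (hinv x hx))
  have hcancel : ∀ X, f x * ((f x)⁻¹ * X) = X := fun X => by rw [← mul_assoc, hfh, one_mul]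
  rw [pderiv'_mul b (hdh.fun_mul hP) hdf, pderiv'_mul b hdh hP, pderiv'_inv hU hf hinv hx, hAtil]
  simp only [mul_add, add_mul, mul_sub, sub_mul, neg_mul, mul_assoc, hcancel]
  abel

end Gauge

/-- Gauge invariance of the Yang–Mills equation: if `A` satisfies
`Σ_b (∂_b F^{ab} + [A_b, F^{ab}]) = 0` then so does its gauge transform
`Ã_μ = f⁻¹ ∂_μ f + f⁻¹ A_μ f`. -/
theorem yang_mills_gauge_invariance {m n : ℕ} (U : Set (Fin m → ℝ)) (hU : IsOpen U)
    (G : Matrix (Fin m) (Fin m) ℝ) (hGsymm : ∀ μ ν, G μ ν = G ν μ) (hGinv : IsUnit G)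
    (A : Fin m → (Fin m → ℝ) → Matrix (Fin n) (Fin n) ℝ)
    (hA : ∀ μ, ContDiffOn ℝ 2 (A μ) U)
    (f : (Fin m → ℝ) → Matrix (Fin n) (Fin n) ℝ)
    (hf : ContDiffOn ℝ 2 f U)
    (hinv : ∀ x ∈ U, IsUnit (f x))
    (F Fup : Fin m → Fin m → (Fin m → ℝ) → Matrix (Fin n) (Fin n) ℝ)
    (hF : ∀ μ ν x, F μ ν x =
      pderiv' μ (A ν) x - pderiv' ν (A μ) x + (A μ x * A ν x - A ν x * A μ x))
    (hFup : ∀ a b x, Fup a b x = ∑ μ : Fin m, ∑ ν : Fin m, (G a μ * G b ν) • F μ ν x)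
    (Atil : Fin m → (Fin m → ℝ) → Matrix (Fin n) (Fin n) ℝ)
    (hAtil : ∀ μ x, Atil μ x = (f x)⁻¹ * pderiv' μ f x + (f x)⁻¹ * A μ x * f x)
    (Ftil Ftilup : Fin m → Fin m → (Fin m → ℝ) → Matrix (Fin n) (Fin n) ℝ)
    (hFtil : ∀ μ ν x, Ftil μ ν x =
      pderiv' μ (Atil ν) x - pderiv' ν (Atil μ) x
        + (Atil μ x * Atil ν x - Atil ν x * Atil μ x))
    (hFtilup : ∀ a b x, Ftilup a b x = ∑ μ : Fin m, ∑ ν : Fin m, (G a μ * G b ν) • Ftil μ ν x)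
    (hYM : ∀ a : Fin m, ∀ x ∈ U,
      ∑ b : Fin m, (pderiv' b (Fup a b) x + (A b x * Fup a b x - Fup a b x * A b x)) = 0) :
    ∀ a : Fin m, ∀ x ∈ U,
      ∑ b : Fin m,
        (pderiv' b (Ftilup a b) x + (Atil b x * Ftilup a b x - Ftilup a b x * Atil b x)) = 0 := by
  intro a x hx
  have hup : ∀ b, ∀ y ∈ U, Ftilup a b y = (f y)⁻¹ * Fup a b y * f y := by
    intro b y hy
    simp only [hFtilup, hFup, Finset.mul_sum, Finset.sum_mul]
    refine Finset.sum_congr rfl fun μ _ => Finset.sum_congr rfl fun ν _ => ?_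
    rw [hFtil, hF, curvature_conj hU hA hf hinv hAtil hy, mul_smul_comm, smul_mul_assoc]
  have hdF : ∀ μ ν, DifferentiableAt ℝ (F μ ν) x := by
    intro μ ν
    have hdA := fun μ => differentiableAt_of_contDiffOn hU hx (by norm_num) (hA μ)
    have hdp := fun μ ν =>
      differentiableAt_of_contDiffOn hU hx (by norm_num) (contDiffOn_pderiv' hU μ (hA ν))
    rw [funext (hF μ ν)]
    exact ((hdp μ ν).fun_sub (hdp ν μ)).fun_add
      (((hdA μ).fun_mul (hdA ν)).fun_sub ((hdA ν).fun_mul (hdA μ)))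
  have hdFup : ∀ b, DifferentiableAt ℝ (Fup a b) x := by
    intro b
    rw [funext (hFup a b)]
    exact DifferentiableAt.fun_sum fun μ _ => DifferentiableAt.fun_sum fun ν _ =>
      (hdF μ ν).fun_const_smul _
  calc _ = ∑ b : Fin m, (f x)⁻¹ *
        (pderiv' b (Fup a b) x + (A b x * Fup a b x - Fup a b x * A b x)) * f x := by
        refine Finset.sum_congr rfl fun b _ => ?_
        rw [pderiv'_congr hU hx b (hup b), hup b x hx,
          covariant_conj hU hf hinv hAtil hx (hdFup b)]
    _ = 0 := by rw [← Finset.sum_mul, ← Finset.mul_sum, hYM a x hx, mul_zero, zero_mul]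
end

section
/- Let n ≥ 1 and let U ⊆ M_n(ℝ) be an open connected set all of whose elements are invertible matrices. Let η : U → M_n(ℝ) be differentiable and suppose that for every g ∈ U and every ξ ∈ M_n(ℝ) the directional derivative of η at g in the direction g·ξ equals [η(g), ξ] := η(g)·ξ − ξ·η(g). Then there exists a matrix C ∈ M_n(ℝ) such that η(g) = g⁻¹ · C · g for all g ∈ U. (In other words, the infinitesimal equivariance equation dη(ρ_ξ) + [ξ, η] = 0 along the group directions forces η to be of the Ad-equivariant form g⁻¹ C g.) -/
/-- If `η` is differentiable on a connected open set `U` of invertible matrices and its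
directional derivative in the group direction `g·ξ` equals `[η(g), ξ]`, then
`η(g) = g⁻¹ C g` for some constant matrix `C`. -/
theorem equivariance_from_infinitesimal {n : ℕ} (hn : 1 ≤ n)
    (U : Set (Matrix (Fin n) (Fin n) ℝ)) (hUopen : IsOpen U) (hUconn : IsConnected U)
    (hUinv : ∀ g ∈ U, IsUnit g)
    (η : Matrix (Fin n) (Fin n) ℝ → Matrix (Fin n) (Fin n) ℝ)
    (hη : ∀ g ∈ U, DifferentiableAt ℝ η g)
    (hder : ∀ g ∈ U, ∀ ξ : Matrix (Fin n) (Fin n) ℝ,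
      fderiv ℝ η g (g * ξ) = η g * ξ - ξ * η g) :
    ∃ C : Matrix (Fin n) (Fin n) ℝ, ∀ g ∈ U, η g = g⁻¹ * C * g := by
  -- `Ring.inverse` agrees with the matrix inverse and carries the Fréchet derivative in Mathlib.
  have key : ∀ g ∈ U, HasFDerivAt (𝕜 := ℝ) (fun x => x * η x * Ring.inverse x)
      (0 : Matrix (Fin n) (Fin n) ℝ →L[ℝ] Matrix (Fin n) (Fin n) ℝ) g := by
    intro g hg
    obtain ⟨u, rfl⟩ := hUinv g hg
    have hd := ((hasFDerivAt_id (𝕜 := ℝ) (u : Matrix (Fin n) (Fin n) ℝ)).mul'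
      (hη _ hg).hasFDerivAt).mul' (hasFDerivAt_ringInverse (𝕜 := ℝ) u)
    refine hd.congr_fderiv ?_
    ext1 h
    -- Every direction `h` has the form `g * ξ`, with `ξ = g⁻¹ * h`.
    obtain ⟨ξ, rfl⟩ : ∃ ξ, h = (u : Matrix (Fin n) (Fin n) ℝ) * ξ :=
      ⟨(↑u⁻¹ : Matrix (Fin n) (Fin n) ℝ) * h, by simp only [Units.mul_inv_cancel_left]⟩
    have hξ := hder _ hg ξ
    change (u : Matrix (Fin n) (Fin n) ℝ) * η u * -((↑u⁻¹ : Matrix (Fin n) (Fin n) ℝ) *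
        (u.val * ξ) *
        (↑u⁻¹ : Matrix (Fin n) (Fin n) ℝ))
      + (u * fderiv ℝ η u (u * ξ) + u * ξ * η u) * Ring.inverse (u : Matrix (Fin n) (Fin n) ℝ) = 0
    rw [hξ, Ring.inverse_unit, Units.inv_mul_cancel_left]
    noncomm_ring
  obtain ⟨C, hC⟩ := hUopen.exists_is_const_of_fderiv_eq_zero (𝕜 := ℝ) hUconn.isPreconnected
    (fun g hg => (key g hg).differentiableAt.differentiableWithinAt)
    (fun g hg => (key g hg).fderiv)
  refine ⟨C, fun g hg => ?_⟩
  rw [← hC g hg, Matrix.nonsing_inv_eq_ringInverse]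
  obtain ⟨u, rfl⟩ := hUinv g hg
  simp only [Ring.inverse_unit, mul_assoc, Units.inv_mul, mul_one, Units.inv_mul_cancel_left]
end
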